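/- Let p be a prime with p ≡ 1 (mod 8), F = ℚ(√p, √2) and k* = ℚ(√2, √p, i) = F(i). Then every unit of O_{k*} is the product of a root of unity of k* (a power of ζ₈) and a unit of O_F; that is, O_{k*}^× = ⟨ζ₈⟩ · O_F^×, so the Hasse unit index Q_{k*} = [O_{k*}^× : W_{k*}·O_F^×] equals 1. -/

import Mathlib

/-!
Let `u` be a unit of `k* = F(i)`. Complex conjugation commutes with every embedding of `k*`, so all
conjugates of `u / ū` have absolute value one and `u / ū` is a root of unity
(`unit_div_conj_torsion`).

The roots of unity of `k*` are the powers of `ζ₈` (`pow_eight`). Indeed every automorphism of `k*`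
is an involution, which forces the order `N` of a root of unity to satisfy `a ^ 2 ≡ 1 (mod N)` for
all `a` prime to `N`, hence `N ∣ 24`; and `k*` contains no cube roots of unity, since `-3` times a
product of some of `-1, 2, p` is never a rational square.

So `u = ζ₈ ^ k ū`. If `k = 2 m`, then `u / ζ₈ ^ m` is real, thus a unit of `F`. If `k = 2 m + 1`,
then `u = ζ₈ ^ m (1 + ζ₈) a` with `a` real, thus in `F`. This is impossible (`no_odd`): embed `k*`
in an algebraic closure of `ℚ₂`. As `p ≡ 1 (mod 8)` is a square in `ℚ₂`, the field `F` lands in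
`ℚ₂(√2)`, so the valuation of `a` (with `v 2 = 1`) lies in `ℤ / 2`, whereas
`(1 + ζ₈) ^ 2 = ζ₈ (2 + √2)` shows that `1 + ζ₈` has valuation `1/4`, and `u` has valuation `0`.
-/

/- STATEMENT 5: Let p ≡ 1 (mod 8) be prime, F = ℚ(√p, √2), k* = ℚ(√2, √p, i) = F(i).
Then every unit of O_{k*} is a power of ζ₈ times a unit of O_F; in particular the Hasse
unit index Q_{k*} = [O_{k*}^× : W_{k*}·O_F^×] equals 1. -/

open Complex NumberField IntermediateField nonZeroDivisors

noncomputable section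

/-- F = ℚ(√p, √2) as a subfield of ℂ. -/
def Fbiq (p : ℕ) : IntermediateField ℚ ℂ := ℚ⟮(Real.sqrt p : ℂ), (Real.sqrt 2 : ℂ)⟯

/-- k* = ℚ(√2, √p, i) as a subfield of ℂ. -/
def kstar (p : ℕ) : IntermediateField ℚ ℂ :=
  ℚ⟮(Real.sqrt 2 : ℂ), (Real.sqrt p : ℂ), (Complex.I : ℂ)⟯

/-- A primitive 8-th root of unity in ℂ. -/
def zeta8 : ℂ := Complex.exp (Real.pi * Complex.I / 4)

/-! ### Quadratic extensions -/

/-- If `d ^ 2 ∈ M`, then `M(d) = M + M d`. -/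
lemma exists_add_mul_of_mem_sup {L : Type*} [Field L] [Algebra ℚ L] (M : IntermediateField ℚ L)
    {d : L} (hd : d ^ 2 ∈ M) {z : L} (hz : z ∈ M ⊔ ℚ⟮d⟯) :
    ∃ a ∈ M, ∃ b ∈ M, z = a + b * d := by
  by_cases hdM : d ∈ M
  · refine ⟨z, ?_, 0, zero_mem _, by simp⟩
    have : ℚ⟮d⟯ ≤ M := by simpa using hdM
    simpa [sup_eq_left.mpr this] using hz
  have hz' : z ∈ adjoin ℚ ((M : Set L) ∪ {d}) := by
    rwa [adjoin_union, adjoin_self]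
  induction hz' using adjoin_induction with
  | mem x hx =>
    rcases hx with hx | hx
    · exact ⟨x, hx, 0, zero_mem _, by simp⟩
    · exact ⟨0, zero_mem _, 1, one_mem _, by simpa using hx⟩
  | algebraMap x => exact ⟨_, M.algebraMap_mem x, 0, zero_mem _, by simp⟩
  | add x y hx hy h1 h2 =>
    rw [adjoin_union, adjoin_self] at hx hy
    obtain ⟨a, ha, b, hb, rfl⟩ := h1 hx
    obtain ⟨a', ha', b', hb', rfl⟩ := h2 hy
    exact ⟨a + a', add_mem ha ha', b + b', add_mem hb hb', by ring⟩
  | mul x y hx hy h1 h2 =>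
    rw [adjoin_union, adjoin_self] at hx hy
    obtain ⟨a, ha, b, hb, rfl⟩ := h1 hx
    obtain ⟨a', ha', b', hb', rfl⟩ := h2 hy
    exact ⟨a * a' + b * b' * d ^ 2, add_mem (mul_mem ha ha') (mul_mem (mul_mem hb hb') hd),
      a * b' + a' * b, add_mem (mul_mem ha hb') (mul_mem ha' hb), by ring⟩
  | inv x hx h1 =>
    rw [adjoin_union, adjoin_self] at hx
    obtain ⟨a, ha, b, hb, rfl⟩ := h1 hx
    by_cases hb0 : b = 0
    · subst hb0
      exact ⟨a⁻¹, inv_mem ha, 0, zero_mem _, by simp⟩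
    have h₁ : a + b * d ≠ 0 := fun h => hdM (by
      have : d = -a / b := by field_simp; linear_combination h
      exact this ▸ div_mem (neg_mem ha) hb)
    have h₂ : a - b * d ≠ 0 := fun h => hdM (by
      have : d = a / b := by field_simp; linear_combination -h
      exact this ▸ div_mem ha hb)
    have h₃ : a ^ 2 - b ^ 2 * d ^ 2 ≠ 0 := by
      have := mul_ne_zero h₁ h₂
      intro h; apply this; linear_combination h
    have hM : a ^ 2 - b ^ 2 * d ^ 2 ∈ M :=
      sub_mem (pow_mem ha 2) (mul_mem (pow_mem hb 2) hd)
    refine ⟨a / (a ^ 2 - b ^ 2 * d ^ 2), div_mem ha hM, -b / (a ^ 2 - b ^ 2 * d ^ 2),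
      div_mem (neg_mem hb) hM, ?_⟩
    field_simp
    ring

/-- Kummer theory in degree two: an element `c ∈ M` that becomes a square in `M(d)`, where
`d ^ 2 ∈ M`, is a square in `M` up to the factor `d ^ 2`. -/
lemma exists_sq_of_mem_sup {L : Type*} [Field L] [Algebra ℚ L] (M : IntermediateField ℚ L)
    {c d : L} (hc : c ∈ M) (hd : d ^ 2 ∈ M) (hz : ∃ z ∈ M ⊔ ℚ⟮d⟯, z ^ 2 = c) :
    ∃ z ∈ M, z ^ 2 = c ∨ z ^ 2 = c * d ^ 2 := by
  have := algebraRat.charZero L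
  obtain ⟨z, hz, hzc⟩ := hz
  obtain ⟨a, ha, b, hb, rfl⟩ := exists_add_mul_of_mem_sup M hd hz
  by_cases hdM : d ∈ M
  · exact ⟨_, add_mem ha (mul_mem hb hdM), Or.inl hzc⟩
  by_cases hab : a * b = 0
  · rcases mul_eq_zero.mp hab with rfl | rfl
    · exact ⟨b * d ^ 2, mul_mem hb hd, Or.inr (by rw [← hzc]; ring)⟩
    · exact ⟨a, ha, Or.inl (by rw [← hzc]; ring)⟩
  · refine absurd ?_ hdM
    have : d = (c - a ^ 2 - b ^ 2 * d ^ 2) / (2 * (a * b)) := by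
      rw [eq_div_iff (mul_ne_zero two_ne_zero hab), ← hzc]; ring
    rw [this]
    exact div_mem (sub_mem (sub_mem hc (pow_mem ha 2)) (mul_mem (pow_mem hb 2) hd))
      (mul_mem (ofNat_mem M 2) (mul_mem ha hb))

/-! ### The fields `F` and `k*` -/

lemma sqrt_sq_cast (n : ℕ) : ((Real.sqrt n : ℂ)) ^ 2 = n := by
  rw [← Complex.ofReal_pow, Real.sq_sqrt (Nat.cast_nonneg n)]; simp

lemma sqrt_two_sq : ((Real.sqrt 2 : ℂ)) ^ 2 = 2 := by
  exact_mod_cast sqrt_sq_cast 2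

lemma Fbiq_eq (p : ℕ) : Fbiq p = (⊥ ⊔ ℚ⟮(Real.sqrt p : ℂ)⟯) ⊔ ℚ⟮(Real.sqrt 2 : ℂ)⟯ := by
  rw [Fbiq, bot_sup_eq, ← adjoin_union]; rfl

lemma kstar_eq (p : ℕ) : kstar p = Fbiq p ⊔ ℚ⟮Complex.I⟯ := by
  rw [kstar, Fbiq, ← adjoin_union]; congr 1; ext; simp; tauto

lemma sqrt_two_mem (p : ℕ) : (Real.sqrt 2 : ℂ) ∈ kstar p := subset_adjoin _ _ (by simp)
lemma sqrt_p_mem (p : ℕ) : (Real.sqrt p : ℂ) ∈ kstar p := subset_adjoin _ _ (by simp)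
lemma I_mem (p : ℕ) : Complex.I ∈ kstar p := subset_adjoin _ _ (by simp)

instance (p : ℕ) : FiniteDimensional ℚ (kstar p) := by
  unfold kstar
  apply finiteDimensional_adjoin
  have h : ∀ (x : ℂ) (n : ℤ), x ^ 2 = n → IsIntegral ℚ x := fun x n h =>
    IsIntegral.of_pow two_pos (by
      rw [h]; simpa using isIntegral_algebraMap (R := ℚ) (A := ℂ) (x := (n : ℚ)))
  rintro x (rfl | rfl | rfl)
  · exact h _ 2 (by simpa using sqrt_two_sq)
  · exact h _ p (by simpa using sqrt_sq_cast p)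
  · exact h _ (-1) (by simp)

instance (p : ℕ) : NumberField (kstar p) where

/-- `± 3 n` has odd `3`-adic valuation when `3 ∤ n`, hence is not a rational square. -/
lemma not_sq_rat (q : ℚ) (n : ℕ) (hn : ¬ 3 ∣ n) : q ^ 2 ≠ 3 * n ∧ q ^ 2 ≠ - (3 * n) := by
  have hn0 : n ≠ 0 := by rintro rfl; simp at hn
  have hv : padicValRat 3 (3 * n : ℚ) = 1 := by
    have h3 : padicValRat 3 (3 : ℚ) = 1 := by exact_mod_cast padicValRat.self (p := 3) (by norm_num)
    rw [padicValRat.mul (by norm_num) (by exact_mod_cast hn0), h3]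
    simp [padicValNat.eq_zero_of_not_dvd hn]
  have hne : (3 * n : ℚ) ≠ 0 := by positivity
  constructor <;> intro h
  all_goals
    have hq : q ≠ 0 := by rintro rfl; apply hne; linarith
    have := congrArg (padicValRat 3) h
    simp only [padicValRat.neg, hv, padicValRat.pow] at this
    omega

/-! ### Embeddings of `k*` and complex conjugation -/

lemma algHom_gen {p : ℕ} (σ : kstar p →ₐ[ℚ] ℂ) (x : ℂ) (hx : x ∈ kstar p)
    (hg : x ∈ ({(Real.sqrt 2 : ℂ), (Real.sqrt p : ℂ), Complex.I} : Set ℂ)) :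
    σ ⟨x, hx⟩ = x ∨ σ ⟨x, hx⟩ = -x := by
  rw [← sq_eq_sq_iff_eq_or_eq_neg]
  have h : ∀ n : ℤ, x ^ 2 = n → σ ⟨x, hx⟩ ^ 2 = x ^ 2 := fun n h => by
    have : (⟨x, hx⟩ : kstar p) ^ 2 = (n : kstar p) := Subtype.ext (by simpa using h)
    rw [← map_pow, this, h, map_intCast]
  rcases hg with rfl | rfl | rfl
  · exact h 2 (by simpa using sqrt_two_sq)
  · exact h p (by simpa using sqrt_sq_cast p)
  · exact h (-1) (by simp)

/-- Every embedding of `k*` in `ℂ` has image in `k*`: it sends each generator to `±` itself. -/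
lemma algHom_mem {p : ℕ} (σ : kstar p →ₐ[ℚ] ℂ) (z : kstar p) : σ z ∈ kstar p := by
  obtain ⟨z, hz⟩ := z
  have h : ∀ z (hz : z ∈ adjoin ℚ {(Real.sqrt 2 : ℂ), (Real.sqrt p : ℂ), Complex.I}),
      σ ⟨z, hz⟩ ∈ kstar p := fun z hz => by
    induction hz using adjoin_induction with
    | mem x hx =>
      have hx' : x ∈ kstar p := subset_adjoin _ _ hx
      rcases algHom_gen σ x hx' hx with h | h
      · rwa [h]
      · rw [h]; exact neg_mem hx'
    | algebraMap x =>
      have := (kstar p).algebraMap_mem x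
      rwa [← σ.commutes x] at this
    | add x y hx hy h1 h2 =>
      have := add_mem h1 h2
      rwa [← map_add] at this
    | mul x y hx hy h1 h2 =>
      have := mul_mem h1 h2
      rwa [← map_mul] at this
    | inv x hx h1 =>
      have := inv_mem h1
      rwa [← map_inv₀] at this
  exact h z hz

/-- An embedding of `k*` in `ℂ`, seen as an endomorphism of `k*`. -/
def restrictEnd {p : ℕ} (σ : kstar p →ₐ[ℚ] ℂ) : kstar p →ₐ[ℚ] kstar p :=
  σ.codRestrict (kstar p).toSubalgebra (algHom_mem σ)

lemma coe_restrictEnd {p : ℕ} (σ : kstar p →ₐ[ℚ] ℂ) (z : kstar p) :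
    ((restrictEnd σ z : kstar p) : ℂ) = σ z := rfl

/-- The Galois group of `k*` has exponent two. -/
lemma restrictEnd_involutive {p : ℕ} (σ : kstar p →ₐ[ℚ] ℂ) (z : kstar p) :
    restrictEnd σ (restrictEnd σ z) = z := by
  have : (restrictEnd σ).comp (restrictEnd σ) = AlgHom.id ℚ (kstar p) := by
    refine algHom_ext_of_eq_adjoin (S := kstar p) ℚ rfl fun x hx => ?_
    have hx' : x ∈ kstar p := subset_adjoin _ _ hx
    have : restrictEnd σ ⟨x, hx'⟩ = ⟨x, hx'⟩ ∨ restrictEnd σ ⟨x, hx'⟩ = -⟨x, hx'⟩ :=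
      (algHom_gen σ x hx' hx).imp Subtype.ext Subtype.ext
    change restrictEnd σ (restrictEnd σ ⟨x, hx'⟩) = ⟨x, hx'⟩
    rcases this with h | h <;> simp [h]
  exact DFunLike.congr_fun this z

/-- Complex conjugation on `k*`. -/
def conjK (p : ℕ) : kstar p →ₐ[ℚ] kstar p :=
  restrictEnd ((Complex.conjAe.toAlgHom.restrictScalars ℚ).comp (kstar p).val)

lemma coe_conjK {p : ℕ} (z : kstar p) : ((conjK p z : kstar p) : ℂ) = starRingEnd ℂ (z : ℂ) := rfl

/-- Complex conjugation commutes with every embedding of `k*` in `ℂ` (`k*` is a CM field). -/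
lemma map_conjK {p : ℕ} (φ : kstar p →ₐ[ℚ] ℂ) (z : kstar p) :
    φ (conjK p z) = starRingEnd ℂ (φ z) := by
  have : φ.comp (conjK p) = (Complex.conjAe.toAlgHom.restrictScalars ℚ).comp φ := by
    refine algHom_ext_of_eq_adjoin (S := kstar p) ℚ rfl fun x hx => ?_
    have hx' : x ∈ kstar p := subset_adjoin _ _ hx
    change φ (conjK p ⟨x, hx'⟩) = starRingEnd ℂ (φ ⟨x, hx'⟩)
    have hc : (conjK p ⟨x, hx'⟩ = ⟨x, hx'⟩ ∧ starRingEnd ℂ x = x) ∨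
        (conjK p ⟨x, hx'⟩ = -⟨x, hx'⟩ ∧ starRingEnd ℂ x = -x) := by
      rcases hx with rfl | rfl | rfl
      · exact Or.inl ⟨Subtype.ext (by simp [coe_conjK]), by simp⟩
      · exact Or.inl ⟨Subtype.ext (by simp [coe_conjK]), by simp⟩
      · exact Or.inr ⟨Subtype.ext (by simp [coe_conjK]), by simp⟩
    rcases algHom_gen φ x hx' hx with h | h <;> rcases hc with ⟨h1, h2⟩ | ⟨h1, h2⟩ <;>
      simp [h, h1, h2]
  exact DFunLike.congr_fun this z

/-- For a unit `z` of `k*`, all conjugates of `z / z̄` have absolute value one, so by Kronecker's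
theorem it is a root of unity. -/
lemma unit_div_conj_torsion {p : ℕ} (z : kstar p) (hz : IsIntegral ℤ z) (hz' : IsIntegral ℤ z⁻¹)
    (h0 : z ≠ 0) : ∃ n : ℕ, 0 < n ∧ (z / conjK p z) ^ n = 1 := by
  have hi : IsIntegral ℤ (z / conjK p z) := by
    rw [div_eq_mul_inv, ← map_inv₀]
    exact hz.mul (hz'.map ((conjK p).restrictScalars ℤ))
  obtain ⟨n, hn, h⟩ := NumberField.Embeddings.pow_eq_one_of_norm_eq_one (kstar p) ℂ hi
    (fun φ => by
      have h2 := map_conjK φ.toRatAlgHom z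
      have h3 : φ (conjK p z) = starRingEnd ℂ (φ z) := h2
      rw [map_div₀, h3, norm_div, RCLike.norm_conj, div_self]
      simpa using h0)
  exact ⟨n, hn, h⟩

/-! ### Roots of unity in `k*` -/

/-- Some automorphism of `k*` sends the primitive `N`-th root of unity `w` to `w ^ a`, and it is an
involution. -/
lemma pow_eq_self_of_coprime {p : ℕ} {w : kstar p} {N : ℕ} (hw : IsPrimitiveRoot w N) (hN : 0 < N)
    (a : ℕ) (ha : a.Coprime N) : w ^ (a * a) = w := by
  have hroot : ((w ^ a : kstar p) : ℂ) ∈ (minpoly ℚ w).rootSet ℂ := by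
    have h1 : minpoly ℚ w = minpoly ℚ (w ^ a) := by
      have h := hw.minpoly_eq_pow_coprime ha
      rw [minpoly.isIntegrallyClosed_eq_field_fractions' ℚ (hw.isIntegral hN), h,
        ← minpoly.isIntegrallyClosed_eq_field_fractions' ℚ ((hw.isIntegral hN).pow a)]
    rw [h1, Polynomial.mem_rootSet]
    refine ⟨minpoly.ne_zero (Algebra.IsIntegral.isIntegral _), ?_⟩
    have := Polynomial.aeval_algebraMap_apply ℂ (w ^ a) (minpoly ℚ (w ^ a))
    rw [minpoly.aeval, map_zero] at this
    exact this
  rw [← Algebra.IsAlgebraic.range_eval_eq_rootSet_minpoly ℂ w] at hroot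
  obtain ⟨σ, hσ⟩ := hroot
  have h : restrictEnd σ w = w ^ a := Subtype.ext hσ
  have h2 := restrictEnd_involutive σ w
  rwa [h, map_pow, h, ← pow_mul] at h2

/-- The order `N` satisfies `a ^ 2 ≡ 1 (mod N)` for all `a` prime to `N`. If `5 ∤ N`, taking `a = 5`
gives `N ∣ 24`; if `5 ∣ N`, then `w ^ (N / 5)` has order `5` and `a = 2` gives a contradiction. -/
lemma pow_24 {p : ℕ} {w : kstar p} {N : ℕ} (hw : IsPrimitiveRoot w N) (hN : 0 < N) :
    w ^ 24 = 1 := by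
  by_cases h5 : 5 ∣ N
  · obtain ⟨m, rfl⟩ := h5
    have hm : 0 < m := by omega
    have hv : IsPrimitiveRoot (w ^ m) 5 := hw.pow hN (by ring)
    have := pow_eq_self_of_coprime hv (by norm_num) 2 (by norm_num)
    have h3 : (w ^ m) ^ 3 = 1 := by
      have h0 : w ^ m ≠ 0 := hv.ne_zero (by norm_num)
      apply mul_right_cancel₀ h0
      rw [one_mul, ← pow_succ]; exact this
    have := hv.dvd_of_pow_eq_one 3 h3
    norm_num at this
  · have hc : (5 : ℕ).Coprime N := (Nat.Prime.coprime_iff_not_dvd (by norm_num)).mpr h5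
    have := pow_eq_self_of_coprime hw hN 5 hc
    have h0 : w ≠ 0 := hw.ne_zero hN.ne'
    apply mul_right_cancel₀ h0
    rw [one_mul, ← pow_succ]; exact this

/-- By Kummer theory, if `-3` were a square in `k*`, then one of `± 3`, `± 6`, `± 3 p`, `± 6 p` would
be a rational square. -/
lemma not_sq_neg_three (p : ℕ) (hp3 : ¬ 3 ∣ p) (z : ℂ) (hz : z ∈ kstar p) : z ^ 2 ≠ -3 := by
  intro h
  have hn : ∀ n : ℕ, ¬ 3 ∣ n → ∀ x ∈ (⊥ : IntermediateField ℚ ℂ),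
      x ^ 2 ≠ 3 * n ∧ x ^ 2 ≠ -(3 * n) := by
    rintro n hn x hx
    obtain ⟨q, rfl⟩ := mem_bot.mp hx
    have := not_sq_rat q n hn
    simp only [eq_ratCast]
    exact_mod_cast this
  have step : ∀ c : ℤ, (∃ x ∈ Fbiq p, x ^ 2 = (c : ℂ)) → ∃ x ∈ (⊥ : IntermediateField ℚ ℂ),
      x ^ 2 = c ∨ x ^ 2 = c * p ∨ x ^ 2 = c * 2 ∨ x ^ 2 = c * 2 * p := by
    intro c hc
    rw [Fbiq_eq] at hc
    obtain ⟨y, hy, h1 | h1⟩ := exists_sq_of_mem_sup _ (intCast_mem _ c)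
      (by rw [sqrt_two_sq]; exact ofNat_mem _ 2) hc
    · obtain ⟨x, hx, h2⟩ := exists_sq_of_mem_sup _ (intCast_mem _ c)
        (by rw [sqrt_sq_cast]; exact (⊥ : IntermediateField ℚ ℂ).natCast_mem p) ⟨y, hy, h1⟩
      rw [sqrt_sq_cast] at h2
      exact ⟨x, hx, by tauto⟩
    · rw [sqrt_two_sq] at h1
      obtain ⟨x, hx, h2⟩ := exists_sq_of_mem_sup _ (mul_mem (intCast_mem _ c) (ofNat_mem _ 2))
        (by rw [sqrt_sq_cast]; exact (⊥ : IntermediateField ℚ ℂ).natCast_mem p) ⟨y, hy, h1⟩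
      rw [sqrt_sq_cast] at h2
      exact ⟨x, hx, by tauto⟩
  rw [kstar_eq] at hz
  obtain ⟨y, hy, h1⟩ := exists_sq_of_mem_sup (Fbiq p) (c := -3) (d := Complex.I)
    (neg_mem (ofNat_mem _ 3)) (by rw [Complex.I_sq]; exact neg_mem (one_mem _)) ⟨z, hz, h⟩
  have hp2 : ¬ 3 ∣ 2 * p := by omega
  have A := hn 1 (by norm_num)
  have B := hn 2 (by norm_num)
  have C := hn p hp3
  have D := hn (2 * p) hp2
  rcases h1 with h1 | h1
  · obtain ⟨x, hx, h2⟩ := step (-3) ⟨y, hy, by simpa using h1⟩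
    have A := (A x hx).2
    have B := (B x hx).2
    have C := (C x hx).2
    have D := (D x hx).2
    push_cast at *
    rcases h2 with h2 | h2 | h2 | h2
    · exact A (by rw [h2]; ring)
    · exact C (by rw [h2]; ring)
    · exact B (by rw [h2]; ring)
    · exact D (by rw [h2]; ring)
  · obtain ⟨x, hx, h2⟩ := step 3 ⟨y, hy, by rw [h1]; simp⟩
    have A := (A x hx).1
    have B := (B x hx).1
    have C := (C x hx).1
    have D := (D x hx).1
    push_cast at *
    rcases h2 with h2 | h2 | h2 | h2
    · exact A (by rw [h2]; ring)
    · exact C h2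
    · exact B h2
    · exact D (by rw [h2]; ring)

/-- All roots of unity of `k*` are eighth roots of unity: `k*` has no primitive cube root of unity
`η`, because `(2 η + 1) ^ 2 = -3`. -/
lemma pow_eight {p : ℕ} (hp3 : ¬ 3 ∣ p) {w : kstar p} {n : ℕ} (hn : 0 < n) (hw : w ^ n = 1) :
    w ^ 8 = 1 := by
  have hpos : 0 < orderOf w := orderOf_pos_iff.mpr (isOfFinOrder_iff_pow_eq_one.mpr ⟨n, hn, hw⟩)
  have h24 := pow_24 (IsPrimitiveRoot.orderOf w) hpos
  by_contra h
  have h3 : (w ^ 8) ^ 2 + w ^ 8 + 1 = 0 := by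
    have : (w ^ 8 - 1) * ((w ^ 8) ^ 2 + w ^ 8 + 1) = 0 := by linear_combination h24
    exact (mul_eq_zero.mp this).resolve_left (sub_ne_zero.mpr h)
  refine not_sq_neg_three p hp3 ((2 * w ^ 8 + 1 : kstar p) : ℂ) (SetLike.coe_mem _) ?_
  have h4 : (2 * w ^ 8 + 1 : kstar p) ^ 2 = -3 := by linear_combination 4 * h3
  have h5 := congrArg (kstar p).val h4
  rw [map_pow, map_neg, map_ofNat] at h5
  exact h5

/-! ### The root of unity `ζ₈` and the real elements of `k*` -/

lemma zeta8_prim : IsPrimitiveRoot zeta8 8 := by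
  have h := Complex.isPrimitiveRoot_exp 8 (by norm_num)
  have : zeta8 = Complex.exp (2 * Real.pi * Complex.I / (8 : ℕ)) := by
    unfold zeta8; congr 1; push_cast; ring
  rwa [this]

lemma zeta8_eq : zeta8 = Real.sqrt 2 / 2 * (1 + Complex.I) := by
  have : zeta8 = Complex.exp (((Real.pi / 4 : ℝ) : ℂ) * Complex.I) := by
    unfold zeta8; congr 1; push_cast; ring
  rw [this, Complex.exp_mul_I, ← Complex.ofReal_cos, ← Complex.ofReal_sin, Real.cos_pi_div_four,
    Real.sin_pi_div_four]
  push_cast; ring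

lemma zeta8_mem (p : ℕ) : zeta8 ∈ kstar p := by
  rw [zeta8_eq]
  exact mul_mem (div_mem (sqrt_two_mem p) (ofNat_mem _ 2)) (add_mem (one_mem _) (I_mem p))

lemma zeta8_ne_zero : zeta8 ≠ 0 := Complex.exp_ne_zero _

lemma conj_zeta8 : starRingEnd ℂ zeta8 = zeta8⁻¹ := by
  refine eq_inv_of_mul_eq_one_left ?_
  rw [zeta8_eq]
  simp only [map_mul, map_div₀, map_add, map_one, Complex.conj_ofReal, Complex.conj_I, map_ofNat]
  linear_combination (1 - Complex.I ^ 2) / 4 * sqrt_two_sq - 1 / 2 * Complex.I_sq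

/-- The reason why `1 + ζ₈` has valuation `1/4` at `2`. -/
lemma one_add_zeta8_sq : (1 + zeta8) ^ 2 = zeta8 * (2 + Real.sqrt 2) := by
  rw [zeta8_eq]
  linear_combination (1 + 2 * Complex.I + Complex.I ^ 2 - 2 * (1 + Complex.I)) / 4 * sqrt_two_sq +
    1 / 2 * Complex.I_sq

lemma conj_of_mem_Fbiq {p : ℕ} {x : ℂ} (hx : x ∈ Fbiq p) : starRingEnd ℂ x = x := by
  unfold Fbiq at hx
  induction hx using adjoin_induction with
  | mem x hx => rcases hx with rfl | rfl <;> simp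
  | algebraMap x => simp
  | add x y hx hy h1 h2 => rw [map_add, h1, h2]
  | mul x y hx hy h1 h2 => rw [map_mul, h1, h2]
  | inv x hx h1 => rw [map_inv₀, h1]

lemma mem_Fbiq_of_conj {p : ℕ} {x : ℂ} (hx : x ∈ kstar p) (h : starRingEnd ℂ x = x) :
    x ∈ Fbiq p := by
  rw [kstar_eq] at hx
  obtain ⟨a, ha, b, hb, rfl⟩ := exists_add_mul_of_mem_sup (Fbiq p)
    (by rw [Complex.I_sq]; exact neg_mem (one_mem _)) hx
  rw [map_add, map_mul, conj_of_mem_Fbiq ha, conj_of_mem_Fbiq hb, Complex.conj_I] at h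
  have : b = 0 := by linear_combination (Complex.I / 2) * h + b * Complex.I_sq
  simpa [this] using ha

/-! ### Valuations above `2` -/

/-- An integer `p ≡ 1 (mod 8)` is a `2`-adic square, by Hensel's lemma at `1`. -/
lemma exists_sq_padic (p : ℕ) (hp8 : p % 8 = 1) : ∃ s : ℚ_[2], s ^ 2 = p := by
  have h2 : ‖(2 : ℤ_[2])‖ = 2⁻¹ := by exact_mod_cast PadicInt.norm_p (p := 2)
  have hb : ‖(1 - p : ℤ_[2])‖ ≤ (2 : ℝ) ^ (-(3 : ℕ) : ℤ) := by
    have : ‖((1 - p : ℤ) : ℤ_[2])‖ ≤ ((2 : ℕ) : ℝ) ^ (-(3 : ℕ) : ℤ) := by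
      rw [PadicInt.norm_int_le_pow_iff_dvd]
      norm_num
      omega
    exact_mod_cast this
  obtain ⟨z, hz, -⟩ := hensels_lemma (p := 2) (F := (Polynomial.X ^ 2 - Polynomial.C (p : ℤ)))
    (a := 1) (by
      simp only [map_sub, map_pow, Polynomial.aeval_X, Polynomial.aeval_C, one_pow,
        Polynomial.derivative_X_pow, Polynomial.derivative_C]
      simp only [Nat.cast_ofNat, map_mul, map_pow, Polynomial.aeval_X, map_zero,
        algebraMap_int_eq, Int.coe_castRingHom, Int.cast_natCast, sub_zero, one_pow, mul_one,
        map_ofNat]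
      rw [h2]
      refine hb.trans_lt ?_
      norm_num)
  refine ⟨z, ?_⟩
  simp only [map_sub, map_pow, Polynomial.aeval_X, Polynomial.aeval_C, algebraMap_int_eq,
    Int.coe_castRingHom, Int.cast_natCast, sub_eq_zero] at hz
  exact_mod_cast congrArg (fun x : ℤ_[2] => (x : ℚ_[2])) hz

lemma norm_le_one_of_isIntegral {x : PadicAlgCl 2} (hx : IsIntegral ℤ x) : ‖x‖ ≤ 1 := by
  have h1 : IsIntegral (Valued.v (R := PadicAlgCl 2)).integer x := hx.tower_top
  have h2 := (Valuation.integer.integers (Valued.v (R := PadicAlgCl 2))).mem_of_integral h1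
  have h3 : Valued.v x ≤ 1 := h2
  rw [PadicAlgCl.valuation_def] at h3
  exact_mod_cast h3

lemma norm_eq_one_of_isIntegral {x : PadicAlgCl 2} (hx : IsIntegral ℤ x) (hx' : IsIntegral ℤ x⁻¹)
    (h0 : x ≠ 0) : ‖x‖ = 1 := by
  refine le_antisymm (norm_le_one_of_isIntegral hx) ?_
  have := norm_le_one_of_isIntegral hx'
  rw [norm_inv] at this
  exact (inv_le_one₀ (norm_pos_iff.mpr h0)).mp this

lemma norm_two : ‖(2 : PadicAlgCl 2)‖ = 2⁻¹ := by
  have h := PadicAlgCl.norm_extends 2 (2 : ℚ_[2])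
  have h2 : ‖(2 : ℚ_[2])‖ = 2⁻¹ := by exact_mod_cast Padic.norm_p (p := 2)
  rw [h2] at h
  rw [← h, map_ofNat]

lemma norm_sqrt_two_sq {t : PadicAlgCl 2} (ht : t ^ 2 = 2) : ‖t‖ ^ 2 = 2⁻¹ := by
  rw [← norm_pow, ht, norm_two]

/-- `ℚ₂(√2) / ℚ₂` has ramification index two: a nonzero element has absolute value in `2 ^ (ℤ / 2)`.
The two terms `x` and `y √2` never have the same absolute value. -/
lemma norm_sq_zpow {t : PadicAlgCl 2} (ht : t ^ 2 = 2) (x y : ℚ_[2])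
    (h : algebraMap ℚ_[2] (PadicAlgCl 2) x + algebraMap ℚ_[2] (PadicAlgCl 2) y * t ≠ 0) :
    ∃ k : ℤ, ‖algebraMap ℚ_[2] (PadicAlgCl 2) x + algebraMap ℚ_[2] (PadicAlgCl 2) y * t‖ ^ 2
      = 2 ^ k := by
  have hx : ∀ x : ℚ_[2], x ≠ 0 → ∃ k : ℤ, ‖algebraMap ℚ_[2] (PadicAlgCl 2) x‖ ^ 2 = 2 ^ (2 * k) :=
    fun x h0 => by
      refine ⟨-x.valuation, ?_⟩
      have := PadicAlgCl.norm_extends 2 x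
      change ‖algebraMap ℚ_[2] (PadicAlgCl 2) x‖ = _ at this
      rw [this, Padic.norm_eq_zpow_neg_valuation h0, mul_comm, zpow_mul]
      norm_cast
  have hy : ∀ y : ℚ_[2], y ≠ 0 →
      ∃ k : ℤ, ‖algebraMap ℚ_[2] (PadicAlgCl 2) y * t‖ ^ 2 = 2 ^ (2 * k - 1) := fun y h0 => by
    obtain ⟨k, hk⟩ := hx y h0
    refine ⟨k, ?_⟩
    rw [norm_mul, mul_pow, hk, norm_sqrt_two_sq ht, zpow_sub₀ two_ne_zero]; simp [div_eq_mul_inv]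
  by_cases hx0 : x = 0
  · subst hx0
    have hy0 : y ≠ 0 := by rintro rfl; simp at h
    obtain ⟨k, hk⟩ := hy y hy0
    exact ⟨_, by simpa using hk⟩
  by_cases hy0 : y = 0
  · subst hy0
    obtain ⟨k, hk⟩ := hx x hx0
    exact ⟨_, by simpa using hk⟩
  obtain ⟨k, hk⟩ := hx x hx0
  obtain ⟨j, hj⟩ := hy y hy0
  have hne : ‖algebraMap ℚ_[2] (PadicAlgCl 2) x‖ ≠ ‖algebraMap ℚ_[2] (PadicAlgCl 2) y * t‖ := by
    intro he
    rw [he, hj] at hk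
    have := zpow_right_injective₀ (a := (2 : ℝ)) (by norm_num) (by norm_num) hk
    omega
  rw [IsUltrametricDist.norm_add_eq_max_of_norm_ne_norm hne]
  rcases max_choice ‖algebraMap ℚ_[2] (PadicAlgCl 2) x‖ ‖algebraMap ℚ_[2] (PadicAlgCl 2) y * t‖
    with h | h <;> rw [h]
  · exact ⟨_, hk⟩
  · exact ⟨_, hj⟩

/-- Under any embedding of `k*` in an algebraic closure of `ℚ₂`, the field `ℚ(√p)` lands in `ℚ₂`. -/
lemma map_mem_range {p : ℕ} (hp8 : p % 8 = 1) (ρ : kstar p →+* PadicAlgCl 2) (a : ℂ)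
    (ha : a ∈ (⊥ ⊔ ℚ⟮(Real.sqrt p : ℂ)⟯ : IntermediateField ℚ ℂ)) (hk : a ∈ kstar p) :
    ∃ s : ℚ_[2], ρ ⟨a, hk⟩ = algebraMap ℚ_[2] (PadicAlgCl 2) s := by
  obtain ⟨s, hs⟩ := exists_sq_padic p hp8
  obtain ⟨q, hq, r, hr, rfl⟩ := exists_add_mul_of_mem_sup ⊥
    (by rw [sqrt_sq_cast]; exact (⊥ : IntermediateField ℚ ℂ).natCast_mem p) ha
  obtain ⟨q, rfl⟩ := mem_bot.mp hq
  obtain ⟨r, rfl⟩ := mem_bot.mp hr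
  set P : kstar p := ⟨_, sqrt_p_mem p⟩ with hP
  have e : (⟨_, hk⟩ : kstar p) = (q : kstar p) + (r : kstar p) * P := Subtype.ext (by simp [hP])
  have hP2 : P ^ 2 = (p : kstar p) := Subtype.ext (by simpa [hP] using sqrt_sq_cast p)
  have hρ : ρ P ^ 2 = (algebraMap ℚ_[2] (PadicAlgCl 2) s) ^ 2 := by
    rw [← map_pow, hP2, ← map_pow, hs]; simp
  rw [e, map_add, map_mul, map_ratCast, map_ratCast]
  rcases sq_eq_sq_iff_eq_or_eq_neg.mp hρ with h | h
  · exact ⟨q + r * s, by rw [h]; simp⟩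
  · exact ⟨q - r * s, by rw [h]; simp [sub_eq_add_neg]⟩

/-- A unit of `k*` is never of the form `ζ₈ ^ m (1 + ζ₈) a` with `a ∈ F`: in an algebraic closure of
`ℚ₂` the unit has valuation `0`, the factor `1 + ζ₈` has valuation `1/4`, and `a ∈ ℚ₂(√2)` has
valuation in `ℤ / 2`. -/
lemma no_odd {p : ℕ} (hp8 : p % 8 = 1) {z : kstar p} (hz : IsIntegral ℤ z) (hz' : IsIntegral ℤ z⁻¹)
    (h0 : z ≠ 0) {a : ℂ} (ha : a ∈ Fbiq p) (m : ℕ)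
    (h : (z : ℂ) = zeta8 ^ m * ((1 + zeta8) * a)) : False := by
  let ρ : kstar p →+* PadicAlgCl 2 :=
    (IsAlgClosed.lift (R := ℚ) (S := kstar p) (M := PadicAlgCl 2)).toRingHom
  have hint : ∀ x : kstar p, IsIntegral ℤ x → IsIntegral ℤ (ρ x) := fun x hx =>
    hx.map ρ.toIntAlgHom
  have hρz : ‖ρ z‖ = 1 := norm_eq_one_of_isIntegral (hint _ hz)
    (by rw [← map_inv₀]; exact hint _ hz') (by simpa using h0)
  set Z : kstar p := ⟨zeta8, zeta8_mem p⟩ with hZ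
  set S : kstar p := ⟨_, sqrt_two_mem p⟩ with hS
  have ha' : a ∈ kstar p := by rw [kstar_eq]; exact (le_sup_left : Fbiq p ≤ _) ha
  set A : kstar p := ⟨a, ha'⟩ with hA
  have hZ8 : Z ^ 8 = 1 := Subtype.ext (by simpa [hZ] using zeta8_prim.pow_eq_one)
  have hρZ : ‖ρ Z‖ = 1 := by
    have : ‖ρ Z‖ ^ 8 = 1 := by rw [← norm_pow, ← map_pow, hZ8, map_one, norm_one]
    exact (pow_eq_one_iff_of_nonneg (norm_nonneg _) (by norm_num)).mp this
  have hS2 : S ^ 2 = 2 := Subtype.ext sqrt_two_sq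
  have ht : ρ S ^ 2 = 2 := by rw [← map_pow, hS2, map_ofNat]
  have key : z ^ 2 = Z ^ (2 * m + 1) * ((2 + S) * A ^ 2) := by
    apply Subtype.ext
    change (z : ℂ) ^ 2 = zeta8 ^ (2 * m + 1) * ((2 + (Real.sqrt 2 : ℂ)) * a ^ 2)
    rw [h]
    linear_combination zeta8 ^ (2 * m) * a ^ 2 * one_add_zeta8_sq
  have hA0 : A ≠ 0 := by
    rintro hA0
    rw [hA0] at key
    simp [h0] at key
  have hnt := norm_sqrt_two_sq ht
  have h2t : ‖2 + ρ S‖ = ‖ρ S‖ := by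
    have hlt : ‖(2 : PadicAlgCl 2)‖ < ‖ρ S‖ := by
      rw [norm_two]
      by_contra hc
      nlinarith [norm_nonneg (ρ S)]
    rw [IsUltrametricDist.norm_add_eq_max_of_norm_ne_norm hlt.ne, max_eq_right hlt.le]
  have hAk : ∃ k : ℤ, ‖ρ A‖ ^ 2 = 2 ^ k := by
    have ha2 := ha
    rw [Fbiq_eq] at ha2
    obtain ⟨x, hx, y, hy, hxy⟩ := exists_add_mul_of_mem_sup _
      (by rw [sqrt_two_sq]; exact ofNat_mem _ 2) ha2
    have hle : (⊥ ⊔ ℚ⟮(Real.sqrt p : ℂ)⟯ : IntermediateField ℚ ℂ) ≤ kstar p := by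
      rw [kstar_eq, Fbiq_eq]; exact le_sup_left.trans le_sup_left
    obtain ⟨x', hx'⟩ := map_mem_range hp8 ρ x hx (hle hx)
    obtain ⟨y', hy'⟩ := map_mem_range hp8 ρ y hy (hle hy)
    have e : A = ⟨x, hle hx⟩ + ⟨y, hle hy⟩ * S := Subtype.ext hxy
    have e2 : ρ A = algebraMap ℚ_[2] (PadicAlgCl 2) x' + algebraMap ℚ_[2] (PadicAlgCl 2) y' * ρ S := by
      rw [e, map_add, map_mul, hx', hy']
    rw [e2]
    exact norm_sq_zpow ht x' y' (by rw [← e2]; simpa using hA0)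
  obtain ⟨k, hk⟩ := hAk
  have hn := congrArg (fun x => ‖ρ x‖) key
  simp only [map_pow, map_mul, map_add, map_ofNat, norm_pow, norm_mul, hρz, hρZ, one_pow, one_mul,
    h2t, hk] at hn
  have h4 : (2 : ℝ) ^ (2 * k) = 2 ^ (1 : ℤ) := by
    have : (2 : ℝ) ^ (2 * k) = (2 ^ k) ^ 2 := by rw [mul_comm, zpow_mul]; norm_cast
    rw [this, zpow_one]
    have h5 : (1 : ℝ) = (‖ρ S‖ * 2 ^ k) ^ 2 := by rw [← hn]; norm_num
    rw [mul_pow, hnt] at h5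
    linarith
  have := zpow_right_injective₀ (a := (2 : ℝ)) (by norm_num) (by norm_num) h4
  omega

/-! ### Decomposition of units -/

/-- If `z = ζ₈ ^ (2 m) z̄`, then `z / ζ₈ ^ m` is real. If `z = ζ₈ ^ (2 m + 1) z̄`, then
`z / (ζ₈ ^ m (1 + ζ₈))` is real, since `(1 + ζ₈) / (1 + ζ₈⁻¹) = ζ₈`. -/
lemma main_decomp {p : ℕ} (hp3 : ¬ 3 ∣ p) (hp8 : p % 8 = 1) {z : kstar p} (hz : IsIntegral ℤ z)
    (hz' : IsIntegral ℤ z⁻¹) (h0 : z ≠ 0) :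
    ∃ n : ℕ, ∃ x ∈ Fbiq p, (z : ℂ) = zeta8 ^ n * x := by
  obtain ⟨n, hn, hw⟩ := unit_div_conj_torsion z hz hz' h0
  have h8 := pow_eight hp3 hn hw
  have hzC : (z : ℂ) ≠ 0 := by simpa using h0
  have hc0 : starRingEnd ℂ (z : ℂ) ≠ 0 := by simpa using hzC
  have h8' : ((z : ℂ) / starRingEnd ℂ (z : ℂ)) ^ 8 = 1 := congrArg (kstar p).val h8
  obtain ⟨k, -, hk⟩ := zeta8_prim.eq_pow_of_pow_eq_one h8'
  rw [eq_div_iff hc0] at hk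
  have hζ := zeta8_ne_zero
  have hym : ∀ m, (z : ℂ) / zeta8 ^ m ∈ kstar p := fun m => div_mem z.2 (pow_mem (zeta8_mem p) m)
  obtain ⟨m, hm | hm⟩ := k.even_or_odd'
  · refine ⟨m, z / zeta8 ^ m, mem_Fbiq_of_conj (hym m) ?_, by field_simp⟩
    rw [map_div₀, map_pow, conj_zeta8, inv_pow]
    generalize starRingEnd ℂ (z : ℂ) = c at *
    rw [← hk, hm]
    field_simp
    ring
  · have h1 : 1 + zeta8 ≠ 0 := by
      intro h
      have h4 : zeta8 ^ 2 = 1 := by linear_combination (zeta8 - 1) * h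
      have := zeta8_prim.dvd_of_pow_eq_one 2 h4
      norm_num at this
    refine (no_odd hp8 hz hz' h0 (a := z / zeta8 ^ m / (1 + zeta8)) ?_ m (by field_simp)).elim
    refine mem_Fbiq_of_conj (div_mem (hym m) (add_mem (one_mem _) (zeta8_mem p))) ?_
    rw [map_div₀, map_div₀, map_add, map_one, map_pow, conj_zeta8, inv_pow]
    generalize starRingEnd ℂ (z : ℂ) = c at *
    rw [← hk, hm]
    have h2 : 1 + zeta8⁻¹ = (1 + zeta8) / zeta8 := by field_simp; ring
    rw [h2]
    field_simp
    ring

theorem statement_5 (p : ℕ) (hp : p.Prime) (hp8 : p % 8 = 1)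
    (hle : Fbiq p ≤ kstar p) :
    (∀ u : (𝓞 (kstar p))ˣ, ∃ (n : ℕ) (v : (𝓞 (Fbiq p))ˣ),
      (((u : 𝓞 (kstar p)) : kstar p) : ℂ) =
        zeta8 ^ n * (((v : 𝓞 (Fbiq p)) : Fbiq p) : ℂ)) ∧
    (Subgroup.closure {u : (𝓞 (kstar p))ˣ |
        (∃ n : ℕ, (((u : 𝓞 (kstar p)) : kstar p) : ℂ) = zeta8 ^ n) ∨
        ∃ v : (𝓞 (Fbiq p))ˣ, (((u : 𝓞 (kstar p)) : kstar p) : ℂ) =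
          (((v : 𝓞 (Fbiq p)) : Fbiq p) : ℂ)}).index = 1 := by
  have hp3 : ¬ 3 ∣ p := by
    intro h
    have := (Nat.prime_dvd_prime_iff_eq Nat.prime_three hp).mp h
    omega
  have hζint : IsIntegral ℤ zeta8 := zeta8_prim.isIntegral (by norm_num)
  have decomp : ∀ u : (𝓞 (kstar p))ˣ, ∃ (n : ℕ) (v : (𝓞 (Fbiq p))ˣ),
      (((u : 𝓞 (kstar p)) : kstar p) : ℂ) =
        zeta8 ^ n * (((v : 𝓞 (Fbiq p)) : Fbiq p) : ℂ) := by
    intro u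
    have hmul : ((u : 𝓞 (kstar p)) : kstar p) * ((u⁻¹ : (𝓞 (kstar p))ˣ) : 𝓞 (kstar p)) = 1 := by
      rw [← map_mul, Units.mul_inv, map_one]
    set z : kstar p := ((u : 𝓞 (kstar p)) : kstar p) with hzdef
    have h0 : z ≠ 0 := left_ne_zero_of_mul_eq_one hmul
    have hz : IsIntegral ℤ z := RingOfIntegers.isIntegral_coe _
    have hz' : IsIntegral ℤ z⁻¹ := by
      rw [inv_eq_of_mul_eq_one_right hmul]; exact RingOfIntegers.isIntegral_coe _
    obtain ⟨n, x, hx, hzx⟩ := main_decomp hp3 hp8 hz hz' h0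
    have hzC : IsIntegral ℤ (z : ℂ) := hz.map ((kstar p).val.restrictScalars ℤ)
    have hzC' : IsIntegral ℤ (z : ℂ)⁻¹ := by
      have := hz'.map ((kstar p).val.restrictScalars ℤ)
      simpa using this
    have hx0 : x ≠ 0 := by
      rintro rfl
      rw [mul_zero] at hzx
      exact h0 (Subtype.ext hzx)
    have hζn := pow_ne_zero n zeta8_ne_zero
    have hxi : IsIntegral ℤ x := by
      have : x = z * (zeta8⁻¹) ^ n := by rw [hzx, inv_pow]; field_simp
      rw [this]
      exact hzC.mul ((zeta8_prim.inv.isIntegral (by norm_num)).pow n)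
    have hxi' : IsIntegral ℤ x⁻¹ := by
      have : x⁻¹ = (z : ℂ)⁻¹ * zeta8 ^ n := by rw [hzx]; field_simp
      rw [this]
      exact hzC'.mul (hζint.pow n)
    have integral_of_coe : ∀ y : Fbiq p, IsIntegral ℤ (y : ℂ) → IsIntegral ℤ y := fun y hy =>
      (isIntegral_algHom_iff ((Fbiq p).val.restrictScalars ℤ) Subtype.val_injective).mp hy
    let X : Fbiq p := ⟨x, hx⟩
    have hX0 : X ≠ 0 := fun h => hx0 (congrArg Subtype.val h)
    refine ⟨n, ⟨⟨X, integral_of_coe X hxi⟩, ⟨X⁻¹, integral_of_coe X⁻¹ (by simpa [X] using hxi')⟩,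
      ?_, ?_⟩, hzx⟩
    · exact RingOfIntegers.ext (mul_inv_cancel₀ hX0)
    · exact RingOfIntegers.ext (inv_mul_cancel₀ hX0)
  refine ⟨decomp, ?_⟩
  rw [Subgroup.index_eq_one, eq_top_iff]
  intro u _
  obtain ⟨n, v, huv⟩ := decomp u
  let Z : kstar p := ⟨zeta8, zeta8_mem p⟩
  have hZ8 : Z ^ 8 = 1 := Subtype.ext zeta8_prim.pow_eq_one
  have hZi : IsIntegral ℤ Z := IsIntegral.of_pow (n := 8) (by norm_num) (hZ8 ▸ isIntegral_one)
  let ζ : (𝓞 (kstar p))ˣ := ⟨⟨Z, hZi⟩, ⟨Z ^ 7, hZi.pow 7⟩,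
    RingOfIntegers.ext (by change Z * Z ^ 7 = 1; rw [← hZ8]; ring),
    RingOfIntegers.ext (by change Z ^ 7 * Z = 1; rw [← hZ8]; ring)⟩
  have hζn : ((((ζ ^ n : (𝓞 (kstar p))ˣ) : 𝓞 (kstar p)) : kstar p) : ℂ) = zeta8 ^ n := by
    simp only [Units.val_pow_eq_pow_val, map_pow]
    rfl
  obtain ⟨v', hv'⟩ : ∃ v' : (𝓞 (kstar p))ˣ, u = ζ ^ n * v' := ⟨(ζ ^ n)⁻¹ * u, by simp⟩
  rw [hv']
  refine mul_mem (Subgroup.subset_closure (Or.inl ⟨n, hζn⟩))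
    (Subgroup.subset_closure (Or.inr ⟨v, ?_⟩))
  apply mul_left_cancel₀ (pow_ne_zero n zeta8_ne_zero)
  rw [← huv, hv', ← hζn, Units.val_mul]
  rfl
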